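/- Let n ≥ 1 be an integer, a = (a_1,…,a_{p−1}) a vector of positive reals and b = (b_1,…,b_p) a vector of positive reals. Set a′ = (n/2, a_1,…,a_{p−1}) and suppose v_{a′,b}(t) ≥ 0 for all t ∈ (0,1], and additionally that ∑_{j=1}^p b_j − ∑_{j=1}^{p−1} a_j = n/2. Then the function r ↦ p−1Fp(a;b;−r²) on [0,∞) is n-RPD but is not (n+1)-RPD. -/

import Mathlib

/-!
Write `α = (n/2, a)`, so that `∑ α_j = ∑ b_j`, and `c_k = ∏_j (α_j)_k / (b_j)_k`. Then the function
is `F(r) = ∑_k c_k (-r²)^k / ((n/2)_k k!)`, a modification of the series `0F1(; n/2; -r²)`, which is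
the average of `cos (2⟨x, ω⟩)` over the unit sphere of `ℝ^n` and hence `n`-RPD.

**Positive definiteness.** Frullani's integral gives `c_k = exp (M_k - M_0)`, where
`M_k = ∫ t^k dρ(t)` for the positive finite measure `ρ` on `[0, 1]` with density
`v(t) / (-log t (1 - t))` with respect to `dt / t` (`prod_risingFactorial_div_eq_exp`); positivity
is the hypothesis on `v`, finiteness at `t = 1` is equality of the parameter sums. Expanding the
exponential exhibits `c_k` as the moment sequence of a positive measure on `[0, 1]`, so `F` is a
mixture of rescaled copies of `0F1(; n/2; -s r²)` (`isRPD_exp_expMoment`).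

**Failure in dimension `d = n + 1`.** Put `m_k = c_k (d/2)_k / (n/2)_k`. If `F` were `d`-RPD,
testing positivity on powers of a discrete Laplacian would yield `m_j² ≤ m_{2j}`
(`sq_le_of_isRPD`). Since `c_k ≥ exp (-M_0) > 0`, the sequence `m_k` is unbounded, and this
inequality forces exponential growth along `k = 2^l j`. On the other hand
`m_k ≤ (n/2 + 1)_k / (n/2)_k` is at most linear in `k` (`not_isRPD_succ`).
-/

/-- Rising factorial (Pochhammer symbol) `(x)_k = x(x+1)⋯(x+k-1)` for real `x`. -/
noncomputable def risingFactorial (x : ℝ) (k : ℕ) : ℝ := ∏ i ∈ Finset.range k, (x + (i : ℝ))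

/-- The generalized hypergeometric function `pFq(a;b;z)` with real parameters and real
argument, defined by its power series (which converges for every `z` when `p ≤ q`). -/
noncomputable def pFq {p q : ℕ} (a : Fin p → ℝ) (b : Fin q → ℝ) (z : ℝ) : ℝ :=
  ∑' k : ℕ,
    (∏ i, risingFactorial (a i) k) /
      ((∏ j, risingFactorial (b j) k) * (k.factorial : ℝ)) * z ^ k


/-- A continuous function `f : [0,∞) → ℝ` (modelled as `f : ℝ → ℝ` continuous on
`[0,∞)`) is `n`-RPD (radial positive definite in dimension `n`, class `Φ_n`) if for all
`m`, all points `t_1,…,t_m ∈ ℝ^n` and all complex `ξ_1,…,ξ_m`, the Hermitian sum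
`∑_{i,j} f(‖t_i - t_j‖) ξ_i conj(ξ_j)` is a nonnegative real number. -/
def IsRPD (n : ℕ) (f : ℝ → ℝ) : Prop :=
  ContinuousOn f (Set.Ici 0) ∧
  ∀ (m : ℕ) (t : Fin m → EuclideanSpace ℝ (Fin n)) (ξ : Fin m → ℂ),
    ∃ c : ℝ, 0 ≤ c ∧
      (∑ i, ∑ j, (f ‖t i - t j‖ : ℂ) * ξ i * (starRingEnd ℂ) (ξ j)) = (c : ℂ)

open MeasureTheory Set Filter Topology

/-! ### Moments of linear forms on the unit sphere -/

lemma risingFactorial_succ (x : ℝ) (k : ℕ) :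
    risingFactorial x (k + 1) = risingFactorial x k * (x + k) := by
  simp [risingFactorial, Finset.prod_range_succ]

@[simp] lemma risingFactorial_zero (x : ℝ) : risingFactorial x 0 = 1 := by
  simp [risingFactorial]

lemma risingFactorial_pos {x : ℝ} (hx : 0 < x) (k : ℕ) : 0 < risingFactorial x k :=
  Finset.prod_pos fun i _ => by positivity

lemma Gamma_add_natCast {x : ℝ} (hx : 0 < x) (k : ℕ) :
    Real.Gamma (x + k) = risingFactorial x k * Real.Gamma x := by
  induction k with
  | zero => simp
  | succ k ih =>
    have : x + ((k + 1 : ℕ) : ℝ) = (x + k) + 1 := by push_cast; ring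
    rw [this, Real.Gamma_add_one (by positivity), ih, risingFactorial_succ]
    ring

lemma integral_Ioi_pow_mul_exp_neg_sq (q : ℕ) :
    ∫ x in Ioi (0 : ℝ), x ^ q * Real.exp (-x ^ 2) = 1 / 2 * Real.Gamma (((q : ℝ) + 1) / 2) := by
  have h := integral_rpow_mul_exp_neg_rpow (p := 2) (q := q) two_pos
    (by have : (0 : ℝ) ≤ q := q.cast_nonneg
        linarith)
  simpa using h

lemma integral_even_pow_mul_exp_neg_sq (k : ℕ) :
    ∫ x : ℝ, x ^ (2 * k) * Real.exp (-x ^ 2) = risingFactorial (1 / 2) k * Real.Gamma (1 / 2) := by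
  have h := integral_comp_abs (f := fun x : ℝ => x ^ (2 * k) * Real.exp (-x ^ 2))
  simp only [sq_abs, pow_mul] at h
  simp only [pow_mul]
  rw [h]
  simp only [← pow_mul]
  rw [integral_Ioi_pow_mul_exp_neg_sq, ← Gamma_add_natCast (by norm_num)]
  have : (((2 * k : ℕ) : ℝ) + 1) / 2 = 1 / 2 + k := by push_cast; ring
  rw [this]; ring

/-- Rotating `x` onto a coordinate axis splits the Gaussian integral into one-dimensional ones. -/
lemma integral_inner_pow_mul_gaussian (d : ℕ) (hd : 1 ≤ d) (x : EuclideanSpace ℝ (Fin d))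
    (k : ℕ) :
    ∫ y : EuclideanSpace ℝ (Fin d), (inner ℝ x y) ^ (2 * k) * Real.exp (-‖y‖ ^ 2) =
      ‖x‖ ^ (2 * k) * (risingFactorial (1 / 2) k * Real.Gamma (1 / 2)) *
        (Real.Gamma (1 / 2)) ^ (d - 1) := by
  obtain ⟨u, hu, hxu⟩ : ∃ u : EuclideanSpace ℝ (Fin d), ‖u‖ = 1 ∧ x = ‖x‖ • u := by
    rcases eq_or_ne x 0 with rfl | hx
    · exact ⟨EuclideanSpace.single ⟨0, hd⟩ 1, by simp, by simp⟩
    · refine ⟨‖x‖⁻¹ • x, ?_, ?_⟩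
      · rw [norm_smul, norm_inv, norm_norm, inv_mul_cancel₀ (norm_ne_zero_iff.2 hx)]
      · rw [smul_smul, mul_inv_cancel₀ (norm_ne_zero_iff.2 hx), one_smul]
  let i₀ : Fin d := ⟨0, hd⟩
  obtain ⟨b, hb⟩ := Orthonormal.exists_orthonormalBasis_extension_of_card_eq (𝕜 := ℝ)
    (ι := Fin d) (E := EuclideanSpace ℝ (Fin d)) (by simp) (v := fun _ => u) (s := {i₀}) (by
      constructor
      · intro i; simpa [Set.domRestrict] using hu
      · intro i j hij
        exact absurd (Subsingleton.elim i j) hij)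
  have hbu : b i₀ = u := hb i₀ rfl
  have h1 := b.measurePreserving_repr.integral_comp
    b.repr.toHomeomorph.measurableEmbedding
    (fun z : EuclideanSpace ℝ (Fin d) => (‖x‖ * z i₀) ^ (2 * k) * Real.exp (-‖z‖ ^ 2))
  have h2 : ∀ y, (‖x‖ * (b.repr y) i₀) ^ (2 * k) * Real.exp (-‖b.repr y‖ ^ 2)
      = (inner ℝ x y) ^ (2 * k) * Real.exp (-‖y‖ ^ 2) := by
    intro y
    rw [b.repr_apply_apply, hbu, LinearIsometryEquiv.norm_map]
    congr 2
    conv_rhs => rw [hxu, inner_smul_left]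
    simp
  simp only [h2] at h1
  rw [h1, ← (PiLp.volume_preserving_toLp (Fin d)).integral_comp
    (MeasurableEquiv.toLp 2 _).measurableEmbedding]
  have h3 : ∀ z : Fin d → ℝ, (‖x‖ * (WithLp.toLp 2 z : EuclideanSpace ℝ (Fin d)) i₀) ^ (2 * k) *
      Real.exp (-‖(WithLp.toLp 2 z : EuclideanSpace ℝ (Fin d))‖ ^ 2) =
      ‖x‖ ^ (2 * k) * ∏ i, (if i = i₀ then z i ^ (2 * k) else 1) * Real.exp (-(z i) ^ 2) := by
    intro z
    rw [Finset.prod_mul_distrib, ← Real.exp_sum, EuclideanSpace.norm_sq_eq, mul_pow]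
    simp [Finset.sum_neg_distrib, mul_assoc, Finset.prod_ite_eq']
  refine (integral_congr_ae (Filter.Eventually.of_forall h3)).trans ?_
  rw [integral_const_mul, integral_fintype_prod_volume_eq_prod
    (f := fun i (t : ℝ) => (if i = i₀ then t ^ (2 * k) else 1) * Real.exp (-t ^ 2)),
    ← Finset.mul_prod_erase _ _ (Finset.mem_univ i₀)]
  have h4 : ∀ i ∈ Finset.univ.erase i₀,
      ∫ t : ℝ, (if i = i₀ then t ^ (2 * k) else 1) * Real.exp (-t ^ 2) = Real.Gamma (1 / 2) := by
    intro i hi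
    have := integral_even_pow_mul_exp_neg_sq 0
    simpa [Finset.ne_of_mem_erase hi] using this
  rw [Finset.prod_congr rfl h4]
  simp only [if_true, integral_even_pow_mul_exp_neg_sq]
  simp [mul_assoc]

/-- The moments `∫ ⟨x, ω⟩ ^ (2k) dσ(ω)` of the surface measure `σ` on the unit sphere. -/
lemma integral_sphere_inner_pow (d : ℕ) (hd : 1 ≤ d) (x : EuclideanSpace ℝ (Fin d)) (k : ℕ) :
    ∫ ω, (inner ℝ x (ω : EuclideanSpace ℝ (Fin d))) ^ (2 * k)
        ∂(volume : Measure (EuclideanSpace ℝ (Fin d))).toSphere =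
      (volume : Measure (EuclideanSpace ℝ (Fin d))).toSphere.real univ *
        (‖x‖ ^ (2 * k) * risingFactorial (1 / 2) k / risingFactorial (d / 2) k) := by
  have : Nonempty (Fin d) := ⟨⟨0, hd⟩⟩
  set μ : Measure (EuclideanSpace ℝ (Fin d)) := volume with hμ
  have hd0 : (0 : ℝ) < d / 2 := by
    have : (0 : ℝ) < d := by exact_mod_cast hd
    positivity
  -- polar coordinates: the Gaussian moment is the spherical moment times a radial integral
  have polar : ∀ k : ℕ, ∫ y : EuclideanSpace ℝ (Fin d),
      (inner ℝ x y) ^ (2 * k) * Real.exp (-‖y‖ ^ 2) ∂μ =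
      (∫ ω, (inner ℝ x (ω : EuclideanSpace ℝ (Fin d))) ^ (2 * k) ∂μ.toSphere) *
        (1 / 2 * (risingFactorial (d / 2) k * Real.Gamma (d / 2))) := by
    intro k
    have hA : ∫ y : EuclideanSpace ℝ (Fin d),
        (inner ℝ x y) ^ (2 * k) * Real.exp (-‖y‖ ^ 2) ∂μ =
        ∫ y : ({(0)}ᶜ : Set (EuclideanSpace ℝ (Fin d))),
          (inner ℝ x y.1) ^ (2 * k) * Real.exp (-‖y.1‖ ^ 2) ∂(μ.comap (↑)) := by
      rw [integral_subtype_comap (measurableSet_singleton _).compl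
        fun y => (inner ℝ x y) ^ (2 * k) * Real.exp (-‖y‖ ^ 2), restrict_compl_singleton]
    have hB := μ.measurePreserving_homeomorphUnitSphereProd.integral_comp
        (Homeomorph.measurableEmbedding _)
        (fun z => (inner ℝ x (z.1 : EuclideanSpace ℝ (Fin d))) ^ (2 * k) *
          ((z.2 : ℝ) ^ (2 * k) * Real.exp (-(z.2 : ℝ) ^ 2)))
    have hC : ∀ y : ({(0)}ᶜ : Set (EuclideanSpace ℝ (Fin d))),
        (inner ℝ x ((homeomorphUnitSphereProd _ y).1 : EuclideanSpace ℝ (Fin d))) ^ (2 * k) *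
          (((homeomorphUnitSphereProd _ y).2 : ℝ) ^ (2 * k) *
            Real.exp (-((homeomorphUnitSphereProd _ y).2 : ℝ) ^ 2)) =
        (inner ℝ x y.1) ^ (2 * k) * Real.exp (-‖y.1‖ ^ 2) := by
      intro y
      have hy : ‖(y : EuclideanSpace ℝ (Fin d))‖ ≠ 0 := norm_ne_zero_iff.2 y.2
      simp only [homeomorphUnitSphereProd_apply_fst_coe, homeomorphUnitSphereProd_apply_snd_coe,
        inner_smul_right, mul_pow, inv_pow]
      field_simp
    simp only [hC] at hB
    rw [hA, hB, integral_prod_mul (fun ω : Metric.sphere (0 : EuclideanSpace ℝ (Fin d)) 1 =>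
      (inner ℝ x (ω : EuclideanSpace ℝ (Fin d))) ^ (2 * k))
      (fun r : Ioi (0 : ℝ) => (r : ℝ) ^ (2 * k) * Real.exp (-(r : ℝ) ^ 2))]
    congr 1
    simp only [Measure.volumeIoiPow, ENNReal.ofReal]
    rw [integral_withDensity_eq_integral_smul (by fun_prop)]
    rw [integral_subtype_comap measurableSet_Ioi fun a : ℝ ↦ Real.toNNReal
          (a ^ (Module.finrank ℝ (EuclideanSpace ℝ (Fin d)) - 1)) •
            (a ^ (2 * k) * Real.exp (-a ^ 2))]
    rw [← Gamma_add_natCast hd0]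
    have h5 := integral_Ioi_pow_mul_exp_neg_sq (d - 1 + 2 * k)
    have h6 : (((d - 1 + 2 * k : ℕ) : ℝ) + 1) / 2 = d / 2 + k := by
      push_cast [Nat.cast_sub hd]; ring
    rw [h6] at h5
    rw [← h5]
    refine setIntegral_congr_fun measurableSet_Ioi fun r hr => ?_
    have hr : (0 : ℝ) < r := hr
    simp only [finrank_euclideanSpace, Fintype.card_fin, NNReal.smul_def, smul_eq_mul]
    rw [Real.coe_toNNReal _ (by positivity)]
    ring
  have pk := polar k
  have p0 := polar 0
  rw [hμ, integral_inner_pow_mul_gaussian d hd] at pk p0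
  simp only [mul_zero, pow_zero, risingFactorial_zero, one_mul, integral_const, smul_eq_mul,
    mul_one] at p0
  have hG := Real.Gamma_pos_of_pos hd0
  have hr := risingFactorial_pos hd0 k
  rw [← hμ] at pk p0
  have : (∫ ω, (inner ℝ x (ω : EuclideanSpace ℝ (Fin d))) ^ (2 * k) ∂μ.toSphere) *
      risingFactorial (d / 2) k * (1 / 2 * Real.Gamma (d / 2)) =
      ‖x‖ ^ (2 * k) * risingFactorial (1 / 2) k * μ.toSphere.real univ *
        (1 / 2 * Real.Gamma (d / 2)) := by
    linear_combination (-1) * pk + ‖x‖ ^ (2 * k) * risingFactorial (1 / 2) k * p0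
  have := mul_right_cancel₀ (by positivity) this
  field_simp
  linear_combination this

/-! ### Quotients of Pochhammer symbols as exponentials of moments -/

lemma integrableOn_Ioi_zero_of_bound {g E : ℝ → ℝ} (hg : ContinuousOn g (Ioi 0)) (C : ℝ)
    (h01 : ∀ u, 0 < u → u ≤ 1 → |g u| ≤ C) (hE : IntegrableOn E (Ioi 0))
    (h1 : ∀ u, 1 < u → |g u| ≤ E u) : IntegrableOn g (Ioi 0) := by
  rw [← Ioc_union_Ioi_eq_Ioi zero_le_one]
  refine IntegrableOn.union ?_ ?_
  · refine Integrable.mono' (g := fun _ => C) (by simp)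
      ((hg.mono Ioc_subset_Ioi_self).aestronglyMeasurable measurableSet_Ioc) ?_
    filter_upwards [ae_restrict_mem measurableSet_Ioc] with u hu
    exact h01 u hu.1 hu.2
  · refine Integrable.mono' (hE.mono_set (Ioi_subset_Ioi zero_le_one))
      ((hg.mono (Ioi_subset_Ioi zero_le_one)).aestronglyMeasurable measurableSet_Ioi) ?_
    filter_upwards [ae_restrict_mem measurableSet_Ioi] with u hu
    exact h1 u hu

lemma integrableOn_exp_neg_mul {a : ℝ} (ha : 0 < a) :
    IntegrableOn (fun u : ℝ => Real.exp (-(a * u))) (Ioi 0) := by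
  simpa using integrableOn_exp_mul_Ioi (neg_lt_zero.2 ha) 0

lemma integrableOn_frullani_exp {a b : ℝ} (ha : 0 < a) (hb : 0 < b) :
    IntegrableOn (fun u : ℝ => u⁻¹ * (Real.exp (-(a * u)) - Real.exp (-(b * u)))) (Ioi 0) := by
  refine integrableOn_Ioi_zero_of_bound ?_ (a + b) ?_
    ((integrableOn_exp_neg_mul ha).add (integrableOn_exp_neg_mul hb)) ?_
  · exact (continuousOn_inv₀.mono fun x hx => ne_of_gt hx).mul (by fun_prop)
  · intro u hu _
    rw [abs_mul, abs_of_pos (inv_pos.2 hu), inv_mul_le_iff₀ hu, abs_le]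
    have h1 := Real.add_one_le_exp (-(a * u))
    have h2 := Real.add_one_le_exp (-(b * u))
    have h3 : Real.exp (-(a * u)) ≤ 1 := Real.exp_le_one_iff.2 (by nlinarith)
    have h4 : Real.exp (-(b * u)) ≤ 1 := Real.exp_le_one_iff.2 (by nlinarith)
    have := mul_pos ha hu
    have := mul_pos hb hu
    constructor <;> nlinarith
  · intro u hu
    have hu0 : 0 < u := by linarith
    rw [abs_mul, abs_of_pos (inv_pos.2 hu0)]
    have h1 := Real.exp_pos (-(a * u))
    have h2 := Real.exp_pos (-(b * u))
    have h3 : |Real.exp (-(a * u)) - Real.exp (-(b * u))| ≤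
        Real.exp (-(a * u)) + Real.exp (-(b * u)) := by
      rw [abs_le]; constructor <;> linarith
    calc _ ≤ 1 * (Real.exp (-(a * u)) + Real.exp (-(b * u))) := by
          gcongr
          exact inv_le_one_of_one_le₀ hu.le
      _ = _ := by simp

lemma integral_frullani_exp {a b : ℝ} (ha : 0 < a) (hb : 0 < b) :
    ∫ u in Ioi (0 : ℝ), u⁻¹ * (Real.exp (-(a * u)) - Real.exp (-(b * u))) = Real.log (b / a) := by
  have h := Frullani.integral_Ioi_eq (f := fun u : ℝ => Real.exp (-u)) (L := 1) (R := 0)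
    (ContinuousOn.locallyIntegrableOn (by fun_prop) measurableSet_Ioi) ha hb
    (by
      have : Tendsto (fun u : ℝ => Real.exp (-u)) (𝓝 0) (𝓝 (Real.exp (-0))) :=
        (by fun_prop : Continuous fun u : ℝ => Real.exp (-u)).tendsto 0
      simp only [neg_zero, Real.exp_zero] at this
      exact this.mono_left nhdsWithin_le_nhds)
    (Real.tendsto_exp_atBot.comp tendsto_neg_atTop_atBot)
    (by simpa using integrableOn_frullani_exp ha hb)
  simpa using h

/-- The density, in the variable `u = -log t`, of the Lévy measure attached to the parameter
vectors `α` and `β`; its numerator is `v_{α,β}(exp (-u))`. -/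
noncomputable def levyDensity {m : ℕ} (α β : Fin m → ℝ) (u : ℝ) : ℝ :=
  (∑ j, (Real.exp (-(α j * u)) - Real.exp (-(β j * u)))) / (u * (1 - Real.exp (-u)))

/-- The moments `∫ t ^ k dρ(t)` of the measure `ρ` on `[0, 1]` with density `w` in the
variable `u = -log t`. -/
noncomputable def expMoment (w : ℝ → ℝ) (k : ℕ) : ℝ := ∫ u in Ioi (0 : ℝ), Real.exp (-u) ^ k * w u

lemma one_sub_exp_neg_pos {u : ℝ} (hu : 0 < u) : 0 < 1 - Real.exp (-u) := by
  have : Real.exp (-u) < 1 := by simpa using hu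
  linarith

lemma exp_neg_mul_one_add_le {x : ℝ} : Real.exp (-x) * (1 + x) ≤ 1 := by
  have h := Real.add_one_le_exp x
  calc Real.exp (-x) * (1 + x) ≤ Real.exp (-x) * Real.exp x := by gcongr; linarith
    _ = 1 := by rw [← Real.exp_add]; simp

/-- Equality of the parameter sums makes the numerator of the Lévy density `O(u²)` at `0`, so that
the Lévy measure is finite. -/
lemma integrableOn_levyDensity {m : ℕ} {α β : Fin m → ℝ} (hα : ∀ j, 0 < α j) (hβ : ∀ j, 0 < β j)
    (hsum : ∑ j, α j = ∑ j, β j) : IntegrableOn (levyDensity α β) (Ioi 0) := by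
  have hden : ∀ u : ℝ, 0 < u → u ^ 2 ≤ (u * (1 - Real.exp (-u))) * (1 + u) := by
    intro u hu
    have := exp_neg_mul_one_add_le (x := u)
    nlinarith
  refine integrableOn_Ioi_zero_of_bound (C := 2 * ∑ j, ((α j) ^ 2 + (β j) ^ 2))
    (E := fun u => 2 * ∑ j, (Real.exp (-(α j * u)) + Real.exp (-(β j * u)))) ?_ ?_ ?_ ?_
  · refine ContinuousOn.div (by fun_prop) (by fun_prop) fun u hu => ?_
    exact (mul_pos hu (one_sub_exp_neg_pos hu)).ne'
  · intro u hu hu1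
    have hpos := mul_pos hu (one_sub_exp_neg_pos hu)
    rw [levyDensity, abs_div, abs_of_pos hpos, div_le_iff₀ hpos]
    have key : ∀ x : ℝ, 0 < x → |Real.exp (-x) - 1 + x| ≤ x ^ 2 := by
      intro x hx
      have h1 := Real.add_one_le_exp (-x)
      have h2 := exp_neg_mul_one_add_le (x := x)
      rw [abs_le]
      constructor <;> nlinarith [Real.exp_pos (-x), mul_pos hx hx]
    have hnum : |∑ j, (Real.exp (-(α j * u)) - Real.exp (-(β j * u)))| ≤
        (∑ j, ((α j) ^ 2 + (β j) ^ 2)) * u ^ 2 := by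
      have : ∑ j, (Real.exp (-(α j * u)) - Real.exp (-(β j * u))) =
          ∑ j, ((Real.exp (-(α j * u)) - 1 + α j * u) - (Real.exp (-(β j * u)) - 1 + β j * u)) := by
        have h0 : ∑ j, (α j * u - β j * u) = 0 := by
          rw [Finset.sum_sub_distrib, ← Finset.sum_mul, ← Finset.sum_mul, hsum, sub_self]
        rw [← sub_eq_zero, ← Finset.sum_sub_distrib, ← neg_eq_zero, ← Finset.sum_neg_distrib, ← h0]
        refine Finset.sum_congr rfl fun j _ => ?_
        ring
      rw [this, Finset.sum_mul]
      refine (Finset.abs_sum_le_sum_abs _ _).trans (Finset.sum_le_sum fun j _ => ?_)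
      refine (abs_sub _ _).trans ?_
      have h1 := key _ (mul_pos (hα j) hu)
      have h2 := key _ (mul_pos (hβ j) hu)
      nlinarith
    have hS : 0 ≤ ∑ j, ((α j) ^ 2 + (β j) ^ 2) := Finset.sum_nonneg fun j _ => by positivity
    have hd := hden u hu
    have : u ^ 2 ≤ 2 * (u * (1 - Real.exp (-u))) := by nlinarith
    nlinarith
  · refine Integrable.const_mul ?_ 2
    exact integrable_finsetSum _ fun j _ =>
      (integrableOn_exp_neg_mul (hα j)).add (integrableOn_exp_neg_mul (hβ j))
  · intro u hu
    have hu0 : 0 < u := by linarith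
    have hpos := mul_pos hu0 (one_sub_exp_neg_pos hu0)
    rw [levyDensity, abs_div, abs_of_pos hpos, div_le_iff₀ hpos]
    have hnum : |∑ j, (Real.exp (-(α j * u)) - Real.exp (-(β j * u)))| ≤
        ∑ j, (Real.exp (-(α j * u)) + Real.exp (-(β j * u))) := by
      refine (Finset.abs_sum_le_sum_abs _ _).trans (Finset.sum_le_sum fun j _ => ?_)
      have h1 := Real.exp_pos (-(α j * u))
      have h2 := Real.exp_pos (-(β j * u))
      rw [abs_le]; constructor <;> linarith
    have hS : 0 ≤ ∑ j, (Real.exp (-(α j * u)) + Real.exp (-(β j * u))) :=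
      Finset.sum_nonneg fun j _ => by positivity
    have hd := hden u hu0
    have : 1 ≤ 2 * (u * (1 - Real.exp (-u))) := by nlinarith
    nlinarith

lemma integrableOn_exp_pow_mul {w : ℝ → ℝ} (hw : IntegrableOn w (Ioi 0)) (k : ℕ) :
    IntegrableOn (fun u => Real.exp (-u) ^ k * w u) (Ioi 0) := by
  refine Integrable.bdd_mul (c := 1) hw (by fun_prop) ?_
  filter_upwards [ae_restrict_mem measurableSet_Ioi] with u hu
  have hu : (0 : ℝ) < u := hu
  rw [Real.norm_of_nonneg (by positivity)]
  exact pow_le_one₀ (by positivity) (Real.exp_le_one_iff.2 (by linarith))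

lemma expMoment_nonneg {w : ℝ → ℝ} (hw0 : ∀ u, 0 < u → 0 ≤ w u) (k : ℕ) :
    0 ≤ expMoment w k :=
  setIntegral_nonneg measurableSet_Ioi fun u hu => mul_nonneg (by positivity) (hw0 u hu)

lemma expMoment_le {w : ℝ → ℝ} (hw : IntegrableOn w (Ioi 0)) (hw0 : ∀ u, 0 < u → 0 ≤ w u) (k : ℕ) :
    expMoment w k ≤ expMoment w 0 := by
  refine setIntegral_mono_on (integrableOn_exp_pow_mul hw k) (integrableOn_exp_pow_mul hw 0)
    measurableSet_Ioi fun u hu => ?_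
  have hu : (0 : ℝ) < u := hu
  have h := hw0 u hu
  refine mul_le_mul_of_nonneg_right ?_ h
  rw [pow_zero]
  exact pow_le_one₀ (by positivity) (Real.exp_le_one_iff.2 (by linarith))

/-- Consecutive quotients of the Pochhammer quotients are Frullani integrals of the Lévy measure. -/
lemma prod_risingFactorial_div_eq_exp {m : ℕ} {α β : Fin m → ℝ} (hα : ∀ j, 0 < α j)
    (hβ : ∀ j, 0 < β j) (hsum : ∑ j, α j = ∑ j, β j) (k : ℕ) :
    ∏ j, risingFactorial (α j) k / risingFactorial (β j) k =
      Real.exp (expMoment (levyDensity α β) k - expMoment (levyDensity α β) 0) := by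
  have hintegrable := integrableOn_levyDensity hα hβ hsum
  induction k with
  | zero => simp
  | succ k ih =>
    have hαk : ∀ j, 0 < α j + k := fun j => by have := hα j; positivity
    have hβk : ∀ j, 0 < β j + k := fun j => by have := hβ j; positivity
    have hdiff : expMoment (levyDensity α β) k - expMoment (levyDensity α β) (k + 1) =
        ∑ j, Real.log ((β j + k) / (α j + k)) := by
      simp only [← integral_frullani_exp (hαk _) (hβk _)]
      rw [expMoment, expMoment, ← integral_sub (integrableOn_exp_pow_mul hintegrable k)
        (integrableOn_exp_pow_mul hintegrable (k + 1)),
        ← integral_finsetSum _ fun j _ => integrableOn_frullani_exp (hαk j) (hβk j)]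
      refine setIntegral_congr_fun measurableSet_Ioi fun u hu => ?_
      have hu : (0 : ℝ) < u := hu
      have h1 := one_sub_exp_neg_pos hu
      have h2 : ∀ j, u⁻¹ * (Real.exp (-((α j + k) * u)) - Real.exp (-((β j + k) * u))) =
          u⁻¹ * Real.exp (-u) ^ k * (Real.exp (-(α j * u)) - Real.exp (-(β j * u))) := by
        intro j
        rw [← Real.exp_nat_mul, mul_assoc, mul_sub (Real.exp _), ← Real.exp_add, ← Real.exp_add]
        congr 3 <;> ring_nf
      simp only [h2, ← Finset.mul_sum, levyDensity]
      field_simp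
      ring
    have hstep : ∏ j, risingFactorial (α j) (k + 1) / risingFactorial (β j) (k + 1) =
        (∏ j, risingFactorial (α j) k / risingFactorial (β j) k) *
          Real.exp (-∑ j, Real.log ((β j + k) / (α j + k))) := by
      rw [← Finset.sum_neg_distrib, Real.exp_sum, ← Finset.prod_mul_distrib]
      refine Finset.prod_congr rfl fun j _ => ?_
      rw [Real.exp_neg, Real.exp_log (div_pos (hβk j) (hαk j)), risingFactorial_succ,
        risingFactorial_succ, inv_div]
      exact (div_mul_div_comm _ _ _ _).symm
    rw [hstep, ih, ← Real.exp_add, ← hdiff]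
    congr 1
    ring

/-- If a power series is nonnegative on `[0, 1]`, it remains so after its coefficients are multiplied
by powers of the moments of a positive measure on `[0, 1]`. -/
lemma tsum_mul_expMoment_pow_nonneg {w : ℝ → ℝ} (hw : IntegrableOn w (Ioi 0))
    (hw0 : ∀ u, 0 < u → 0 ≤ w u) {q : ℕ → ℝ} (hq : Summable fun k => |q k|)
    (hpos : ∀ t : ℝ, 0 ≤ t → t ≤ 1 → 0 ≤ ∑' k, q k * t ^ k) (j : ℕ) :
    ∀ t : ℝ, 0 ≤ t → t ≤ 1 → 0 ≤ ∑' k, q k * expMoment w k ^ j * t ^ k := by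
  induction j with
  | zero => simpa using hpos
  | succ j ih =>
    intro t ht0 ht1
    have hM0 := expMoment_nonneg hw0
    have hM1 := expMoment_le hw hw0
    have hsw := hasSum_integral_of_summable_integral_norm (μ := volume.restrict (Ioi (0 : ℝ)))
      (F := fun k u => (q k * expMoment w k ^ j * t ^ k) * (Real.exp (-u) ^ k * w u))
      (fun k => (integrableOn_exp_pow_mul hw k).const_mul _) (by
        refine Summable.of_nonneg_of_le (fun k => by positivity) (fun k => ?_)
          (hq.mul_right (expMoment w 0 ^ (j + 1)))
        have h1 : ∫ u in Ioi (0 : ℝ), ‖(q k * expMoment w k ^ j * t ^ k) *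
            (Real.exp (-u) ^ k * w u)‖ = |q k| * expMoment w k ^ j * t ^ k * expMoment w k := by
          have h5 : ∀ c : ℝ, c * expMoment w k =
              ∫ u in Ioi (0 : ℝ), c * (Real.exp (-u) ^ k * w u) := fun c =>
            (integral_const_mul c _).symm
          rw [h5]
          refine setIntegral_congr_fun measurableSet_Ioi fun u hu => ?_
          have h := hw0 u hu
          simp only [norm_mul, Real.norm_eq_abs, abs_pow]
          rw [abs_of_nonneg h, abs_of_nonneg ht0, Real.abs_exp, abs_of_nonneg (hM0 k)]
        rw [h1]
        have h2 : t ^ k ≤ 1 := pow_le_one₀ ht0 ht1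
        have := hM0 k
        calc _ = |q k| * expMoment w k ^ (j + 1) * t ^ k := by ring
          _ ≤ |q k| * expMoment w 0 ^ (j + 1) * 1 := by
            have := hM0 0
            gcongr
            exact hM1 k
          _ = _ := by ring)
    have h3 : ∀ k, ∫ u in Ioi (0 : ℝ), (q k * expMoment w k ^ j * t ^ k) *
        (Real.exp (-u) ^ k * w u) = q k * expMoment w k ^ (j + 1) * t ^ k := by
      intro k
      rw [integral_const_mul]
      change _ * expMoment w k = _
      ring
    simp only [h3] at hsw
    rw [hsw.tsum_eq]
    refine setIntegral_nonneg measurableSet_Ioi fun u hu => ?_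
    have hu : (0 : ℝ) < u := hu
    have h4 : ∀ k, (q k * expMoment w k ^ j * t ^ k) * (Real.exp (-u) ^ k * w u) =
        (q k * expMoment w k ^ j * (t * Real.exp (-u)) ^ k) * w u := by
      intro k; ring
    simp only [h4]
    rw [tsum_mul_right]
    refine mul_nonneg (ih _ (by positivity) ?_) (hw0 u hu)
    exact mul_le_one₀ ht1 (by positivity) (Real.exp_le_one_iff.2 (by linarith))

/-- The exponential series in the moments is a nonnegative combination of the series of
`tsum_mul_expMoment_pow_nonneg`. -/
lemma tsum_mul_exp_expMoment_nonneg {w : ℝ → ℝ} (hw : IntegrableOn w (Ioi 0))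
    (hw0 : ∀ u, 0 < u → 0 ≤ w u) {q : ℕ → ℝ} (hq : Summable fun k => |q k|)
    (hpos : ∀ t : ℝ, 0 ≤ t → t ≤ 1 → 0 ≤ ∑' k, q k * t ^ k) :
    0 ≤ ∑' k, q k * Real.exp (expMoment w k) := by
  have hM0 := expMoment_nonneg hw0
  have hM1 := expMoment_le hw hw0
  have hsum : Summable (fun z : ℕ × ℕ => q z.1 * (expMoment w z.1 ^ z.2 / (z.2.factorial : ℝ))) := by
    have hJ : Summable fun j : ℕ => expMoment w 0 ^ j / (j.factorial : ℝ) :=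
      Real.summable_pow_div_factorial _
    have hprod : Summable fun z : ℕ × ℕ =>
        |q z.1| * (expMoment w 0 ^ z.2 / (z.2.factorial : ℝ)) :=
      Summable.mul_of_nonneg hq hJ (fun k => abs_nonneg _)
        (fun j => div_nonneg (pow_nonneg (hM0 0) _) (Nat.cast_nonneg _))
    refine Summable.of_norm_bounded hprod fun z => ?_
    have hz := hM0 z.1
    rw [norm_mul, Real.norm_eq_abs, Real.norm_of_nonneg
      (div_nonneg (pow_nonneg hz _) (Nat.cast_nonneg _))]
    refine mul_le_mul_of_nonneg_left ?_ (abs_nonneg _)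
    exact div_le_div_of_nonneg_right (pow_le_pow_left₀ hz (hM1 z.1) _) (Nat.cast_nonneg _)
  have h1 : ∀ k, q k * Real.exp (expMoment w k) =
      ∑' j : ℕ, q k * (expMoment w k ^ j / (j.factorial : ℝ)) := by
    intro k
    rw [tsum_mul_left, Real.exp_eq_exp_ℝ, NormedSpace.exp_eq_tsum_div]
  have hsum' : Summable (Function.uncurry fun k j : ℕ =>
      q k * (expMoment w k ^ j / (j.factorial : ℝ))) := by
    rw [Function.uncurry_def]
    exact hsum
  rw [tsum_congr h1, ← hsum'.tsum_comm]
  refine tsum_nonneg fun j => ?_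
  have h2 := tsum_mul_expMoment_pow_nonneg hw hw0 hq hpos j 1 zero_le_one le_rfl
  have h3 : ∀ k, q k * (expMoment w k ^ j / (j.factorial : ℝ)) =
      (q k * expMoment w k ^ j * 1 ^ k) * (j.factorial : ℝ)⁻¹ := by
    intro k; rw [one_pow]; ring
  simp only [h3]
  rw [tsum_mul_right]
  exact mul_nonneg h2 (by positivity)

/-! ### The spherical Bessel kernel -/

/-- The `k`-th term of the series `0F1(; d/2; -r²)`. -/
noncomputable def besselTerm (d k : ℕ) (r : ℝ) : ℝ :=
  (-(r ^ 2)) ^ k / (risingFactorial (d / 2) k * (k.factorial : ℝ))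

lemma abs_besselTerm_le {d : ℕ} (hd : 1 ≤ d) (k : ℕ) {r R : ℝ} (hr : |r| ≤ R) :
    |besselTerm d k r| ≤ (2 * R ^ 2) ^ k / (k.factorial : ℝ) := by
  have hd1 : (1 : ℝ) ≤ d := by exact_mod_cast hd
  have h1 : (1 / 2 : ℝ) ^ k ≤ risingFactorial (d / 2) k := by
    rw [risingFactorial, ← Finset.card_range k, ← Finset.prod_const, Finset.card_range]
    refine Finset.prod_le_prod (fun i _ => by norm_num) fun i _ => ?_
    have : (0 : ℝ) ≤ i := i.cast_nonneg
    linarith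
  have h2 : (0 : ℝ) < (1 / 2 : ℝ) ^ k := by positivity
  have h3 : r ^ 2 ≤ R ^ 2 := sq_le_sq' (by linarith [neg_abs_le r]) ((le_abs_self r).trans hr)
  have h4 : |(-(r ^ 2)) ^ k| = (r ^ 2) ^ k := by rw [abs_pow, abs_neg, abs_of_nonneg (sq_nonneg r)]
  rw [besselTerm, abs_div, h4, abs_of_pos (mul_pos (h2.trans_le h1) (by positivity))]
  calc (r ^ 2) ^ k / (risingFactorial (d / 2) k * (k.factorial : ℝ))
      ≤ (R ^ 2) ^ k / ((1 / 2 : ℝ) ^ k * (k.factorial : ℝ)) := by gcongr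
    _ = _ := by
      rw [mul_pow, one_div, inv_pow]
      field_simp

lemma summable_abs_besselTerm {d : ℕ} (hd : 1 ≤ d) (r : ℝ) :
    Summable fun k => |besselTerm d k r| :=
  Summable.of_nonneg_of_le (fun _ => abs_nonneg _) (fun k => abs_besselTerm_le hd k le_rfl)
    (Real.summable_pow_div_factorial _)

lemma summable_mul_besselTerm {d : ℕ} (hd : 1 ≤ d) {c : ℕ → ℝ} (hc : ∀ k, |c k| ≤ 1) (r : ℝ) :
    Summable fun k => c k * besselTerm d k r := by
  refine Summable.of_norm_bounded (summable_abs_besselTerm hd r) fun k => ?_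
  rw [norm_mul, Real.norm_eq_abs, Real.norm_eq_abs]
  exact mul_le_of_le_one_left (abs_nonneg _) (hc k)

lemma continuous_tsum_besselTerm {d : ℕ} (hd : 1 ≤ d) {c : ℕ → ℝ} (hc : ∀ k, |c k| ≤ 1) :
    Continuous fun r => ∑' k, c k * besselTerm d k r := by
  rw [continuous_iff_continuousAt]
  intro r₀
  have h : ContinuousOn (fun r => ∑' k, c k * besselTerm d k r) (Metric.ball 0 (|r₀| + 1)) := by
    have hu : Summable fun k : ℕ => (2 * (|r₀| + 1) ^ 2) ^ k / (k.factorial : ℝ) :=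
      Real.summable_pow_div_factorial _
    have h1 : ∀ k, ContinuousOn (fun r => c k * besselTerm d k r)
        (Metric.ball 0 (|r₀| + 1)) := fun k => by
      unfold besselTerm
      exact ((((continuous_pow 2).neg.pow k).div_const _).const_mul _).continuousOn
    have h2 : ∀ (k : ℕ), ∀ r ∈ Metric.ball (0 : ℝ) (|r₀| + 1), ‖c k * besselTerm d k r‖ ≤
        (2 * (|r₀| + 1) ^ 2) ^ k / (k.factorial : ℝ) := fun k r hr => by
      rw [norm_mul, Real.norm_eq_abs, Real.norm_eq_abs]
      refine (mul_le_of_le_one_left (abs_nonneg _) (hc k)).trans (abs_besselTerm_le hd k ?_)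
      exact (mem_ball_zero_iff.1 hr).le
    exact continuousOn_tsum h1 hu h2
  refine h.continuousAt (Metric.isOpen_ball.mem_nhds ?_)
  simp

lemma factorial_two_mul (k : ℕ) :
    ((2 * k).factorial : ℝ) = 4 ^ k * k.factorial * risingFactorial (1 / 2) k := by
  induction k with
  | zero => simp
  | succ k ih =>
    rw [show 2 * (k + 1) = 2 * k + 1 + 1 by ring, Nat.factorial_succ, Nat.factorial_succ,
      Nat.factorial_succ, risingFactorial_succ]
    push_cast
    rw [ih]
    ring

/-- `0F1(; d/2; -‖x‖²)` is the average of `cos (2⟨x, ω⟩)` over the unit sphere of `ℝ^d`. -/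
lemma integral_sphere_cos {d : ℕ} (hd : 1 ≤ d) (x : EuclideanSpace ℝ (Fin d)) :
    ∫ ω, Real.cos (2 * inner ℝ x (ω : EuclideanSpace ℝ (Fin d)))
        ∂(volume : Measure (EuclideanSpace ℝ (Fin d))).toSphere =
      (volume : Measure (EuclideanSpace ℝ (Fin d))).toSphere.real univ *
        ∑' k, besselTerm d k ‖x‖ := by
  set σ := (volume : Measure (EuclideanSpace ℝ (Fin d))).toSphere
  have hd0 : (0 : ℝ) < d / 2 := by
    have : (0 : ℝ) < d := by exact_mod_cast hd
    positivity
  let F : ℕ → Metric.sphere (0 : EuclideanSpace ℝ (Fin d)) 1 → ℝ := fun k ω =>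
    ((-1) ^ k * 4 ^ k / ((2 * k).factorial : ℝ)) *
      (inner ℝ x (ω : EuclideanSpace ℝ (Fin d))) ^ (2 * k)
  have hin : ∀ ω : Metric.sphere (0 : EuclideanSpace ℝ (Fin d)) 1,
      |inner ℝ x (ω : EuclideanSpace ℝ (Fin d))| ≤ ‖x‖ := fun ω => by
    simpa using abs_real_inner_le_norm x (ω : EuclideanSpace ℝ (Fin d))
  have hFint : ∀ k, Integrable (F k) σ := by
    intro k
    refine Integrable.of_bound (C := |(-1) ^ k * 4 ^ k / ((2 * k).factorial : ℝ)| * ‖x‖ ^ (2 * k))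
      (by fun_prop) (Filter.Eventually.of_forall fun ω => ?_)
    rw [norm_mul, Real.norm_eq_abs, norm_pow, Real.norm_eq_abs]
    gcongr
    exact hin ω
  have hFnorm : ∀ k, ∫ ω, ‖F k ω‖ ∂σ = σ.real univ * |besselTerm d k ‖x‖| := by
    intro k
    have h1 : ∀ ω, ‖F k ω‖ = (4 ^ k / ((2 * k).factorial : ℝ)) *
      (inner ℝ x (ω : EuclideanSpace ℝ (Fin d))) ^ (2 * k) := by
      intro ω
      rw [norm_mul, Real.norm_eq_abs, norm_pow, Real.norm_eq_abs, (even_two_mul k).pow_abs,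
        abs_div, abs_mul, abs_pow, abs_neg, abs_one, one_pow, one_mul, Nat.abs_cast,
        abs_of_nonneg (by positivity : (0 : ℝ) ≤ 4 ^ k)]
    simp only [h1]
    rw [integral_const_mul, integral_sphere_inner_pow d hd, factorial_two_mul, besselTerm, abs_div,
      abs_pow, abs_neg, abs_of_nonneg (sq_nonneg ‖x‖), ← pow_mul]
    have h2 := risingFactorial_pos hd0 k
    have h3 : 0 < risingFactorial (1 / 2) k := risingFactorial_pos (by norm_num) k
    rw [abs_of_pos (by positivity)]
    field_simp
    exact mul_comm _ _
  have hFval : ∀ k, ∫ ω, F k ω ∂σ = σ.real univ * besselTerm d k ‖x‖ := by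
    intro k
    simp only [F]
    rw [integral_const_mul, integral_sphere_inner_pow d hd, factorial_two_mul, besselTerm,
      neg_pow (‖x‖ ^ 2) k, ← pow_mul]
    have h2 := risingFactorial_pos hd0 k
    have h3 : 0 < risingFactorial (1 / 2) k := risingFactorial_pos (by norm_num) k
    field_simp
    exact mul_comm _ _
  have h := hasSum_integral_of_summable_integral_norm hFint (by
    simp only [hFnorm]
    exact (summable_abs_besselTerm hd _).mul_left _)
  simp only [hFval] at h
  have hcos : ∀ ω, ∑' k, F k ω = Real.cos (2 * inner ℝ x (ω : EuclideanSpace ℝ (Fin d))) := by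
    intro ω
    rw [← (Real.hasSum_cos _).tsum_eq]
    refine tsum_congr fun k => ?_
    simp only [F]
    rw [mul_pow, pow_mul 2]
    norm_num
    ring
  simp only [hcos] at h
  rw [← h.tsum_eq, tsum_mul_left]

lemma toSphere_real_univ_pos {d : ℕ} (hd : 1 ≤ d) :
    0 < (volume : Measure (EuclideanSpace ℝ (Fin d))).toSphere.real univ := by
  have : Nonempty (Fin d) := ⟨⟨0, hd⟩⟩
  rw [Measure.toSphere_real_apply_univ]
  have h1 : 0 < Module.finrank ℝ (EuclideanSpace ℝ (Fin d)) := by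
    rw [finrank_euclideanSpace, Fintype.card_fin]
    omega
  have h2 : 0 < (volume : Measure (EuclideanSpace ℝ (Fin d))).real (Metric.ball 0 1) :=
    ENNReal.toReal_pos (Metric.measure_ball_pos _ _ one_pos).ne' measure_ball_lt_top.ne
  positivity

/-- `0F1(; d/2; -r²)` is positive definite in dimension `d`, being an average of the positive
definite functions `cos (2⟨x, ω⟩)`. -/
lemma besselKernel_nonneg {d : ℕ} (hd : 1 ≤ d) {m : ℕ} (x : Fin m → EuclideanSpace ℝ (Fin d))
    (ξ : Fin m → ℝ) :
    0 ≤ ∑ i, ∑ j, ξ i * ξ j * ∑' k, besselTerm d k ‖x i - x j‖ := by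
  refine nonneg_of_mul_nonneg_right ?_ (toSphere_real_univ_pos hd)
  set σ := (volume : Measure (EuclideanSpace ℝ (Fin d))).toSphere with hσ
  have hintegrable : ∀ i j, Integrable (fun ω : Metric.sphere (0 : EuclideanSpace ℝ (Fin d)) 1 =>
      ξ i * ξ j * Real.cos (2 * inner ℝ (x i - x j) (ω : EuclideanSpace ℝ (Fin d)))) σ := by
    intro i j
    refine Integrable.const_mul (Integrable.of_bound (C := 1) (by fun_prop)
      (Filter.Eventually.of_forall fun ω => Real.abs_cos_le_one _)) _
  have h : σ.real univ * ∑ i, ∑ j, ξ i * ξ j * ∑' k, besselTerm d k ‖x i - x j‖ =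
      ∫ ω, ∑ i, ∑ j, ξ i * ξ j *
        Real.cos (2 * inner ℝ (x i - x j) (ω : EuclideanSpace ℝ (Fin d))) ∂σ := by
    rw [integral_finsetSum _ fun i _ => integrable_finsetSum _ fun j _ => hintegrable i j, Finset.mul_sum]
    refine Finset.sum_congr rfl fun i _ => ?_
    rw [integral_finsetSum _ fun j _ => hintegrable i j, Finset.mul_sum]
    refine Finset.sum_congr rfl fun j _ => ?_
    rw [integral_const_mul, integral_sphere_cos hd]
    ring
  rw [h]
  refine integral_nonneg fun ω => ?_
  have h2 : ∑ i, ∑ j, ξ i * ξ j *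
        Real.cos (2 * inner ℝ (x i - x j) (ω : EuclideanSpace ℝ (Fin d))) =
      (∑ i, ξ i * Real.cos (2 * inner ℝ (x i) (ω : EuclideanSpace ℝ (Fin d)))) ^ 2 +
      (∑ i, ξ i * Real.sin (2 * inner ℝ (x i) (ω : EuclideanSpace ℝ (Fin d)))) ^ 2 := by
    simp only [sq, Finset.sum_mul_sum, ← Finset.sum_add_distrib]
    refine Finset.sum_congr rfl fun i _ => Finset.sum_congr rfl fun j _ => ?_
    rw [inner_sub_left, mul_sub, Real.cos_sub]
    ring
  simp only [h2]
  positivity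

/-! ### Positive definiteness in dimension `n` -/

/-- A real symmetric kernel is tested by real weights: the real and imaginary parts of complex
weights contribute separately. -/
lemma isRPD_of_real {n : ℕ} {f : ℝ → ℝ} (hf : Continuous f)
    (h : ∀ (m : ℕ) (t : Fin m → EuclideanSpace ℝ (Fin n)) (ξ : Fin m → ℝ),
      0 ≤ ∑ i, ∑ j, ξ i * ξ j * f ‖t i - t j‖) : IsRPD n f := by
  refine ⟨hf.continuousOn, fun m t ξ => ?_⟩
  refine ⟨_, add_nonneg (h m t fun i => (ξ i).re) (h m t fun i => (ξ i).im), ?_⟩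
  apply Complex.ext
  · rw [Complex.ofReal_re, Complex.re_sum, ← Finset.sum_add_distrib]
    refine Finset.sum_congr rfl fun i _ => ?_
    rw [Complex.re_sum, ← Finset.sum_add_distrib]
    refine Finset.sum_congr rfl fun j _ => ?_
    simp
    ring
  · rw [Complex.ofReal_im, Complex.im_sum]
    simp only [Complex.im_sum]
    have h1 : ∀ i j, ((f ‖t i - t j‖ : ℂ) * ξ i * (starRingEnd ℂ) (ξ j)).im =
        f ‖t i - t j‖ * ((ξ i).im * (ξ j).re) - f ‖t j - t i‖ * ((ξ j).im * (ξ i).re) := by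
      intro i j
      rw [norm_sub_rev (t j)]
      simp
      ring
    simp only [h1, Finset.sum_sub_distrib]
    rw [sub_eq_zero]
    exact Finset.sum_comm

lemma real_of_isRPD {n : ℕ} {f : ℝ → ℝ} (h : IsRPD n f) {m : ℕ}
    (t : Fin m → EuclideanSpace ℝ (Fin n)) (ξ : Fin m → ℝ) :
      0 ≤ ∑ i, ∑ j, ξ i * ξ j * f ‖t i - t j‖ := by
  obtain ⟨c, hc, h⟩ := h.2 m t fun i => ξ i
  suffices ∑ i, ∑ j, ξ i * ξ j * f ‖t i - t j‖ = c by rw [this]; exact hc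
  have : ((∑ i, ∑ j, ξ i * ξ j * f ‖t i - t j‖ : ℝ) : ℂ) = c := by
    rw [← h]
    push_cast
    refine Finset.sum_congr rfl fun i _ => Finset.sum_congr rfl fun j _ => ?_
    rw [Complex.conj_ofReal]
    ring
  exact_mod_cast this

/-- The quadratic form of the rescaled kernel `0F1(; n/2; -s r²)` is a power series in `s` that is
nonnegative on `[0, 1]`; multiplying its coefficients by `exp (M_k - M_0)` keeps the value at
`s = 1` nonnegative. -/
lemma isRPD_exp_expMoment {n : ℕ} (hn : 1 ≤ n) {w : ℝ → ℝ} (hw : IntegrableOn w (Ioi 0))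
    (hw0 : ∀ u, 0 < u → 0 ≤ w u) :
    IsRPD n (fun r => ∑' k, Real.exp (expMoment w k - expMoment w 0) * besselTerm n k r) := by
  have hc : ∀ k, |Real.exp (expMoment w k - expMoment w 0)| ≤ 1 := fun k => by
    rw [Real.abs_exp, Real.exp_le_one_iff, sub_nonpos]
    exact expMoment_le hw hw0 k
  refine isRPD_of_real (continuous_tsum_besselTerm hn hc) fun m t ξ => ?_
  let q : ℕ → ℝ := fun k => ∑ i, ∑ j, ξ i * ξ j * besselTerm n k ‖t i - t j‖
  have hq : Summable fun k => |q k| := by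
    refine Summable.of_nonneg_of_le (fun _ => abs_nonneg _) (fun k =>
      (Finset.abs_sum_le_sum_abs _ _).trans (Finset.sum_le_sum fun i _ =>
        Finset.abs_sum_le_sum_abs _ _)) ?_
    refine summable_sum fun i _ => summable_sum fun j _ => ?_
    simp only [abs_mul (ξ i * ξ j)]
    exact (summable_abs_besselTerm hn _).mul_left _
  have hswap : ∀ c : ℕ → ℝ, (∀ k, |c k| ≤ 1) →
      ∑ i, ∑ j, ξ i * ξ j * ∑' k, c k * besselTerm n k ‖t i - t j‖ = ∑' k, q k * c k := by
    intro c hc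
    have hs : ∀ i j, HasSum (fun k => ξ i * ξ j * (c k * besselTerm n k ‖t i - t j‖))
        (ξ i * ξ j * ∑' k, c k * besselTerm n k ‖t i - t j‖) := fun i j =>
      (summable_mul_besselTerm hn hc _).hasSum.mul_left _
    have := hasSum_sum fun i (_ : i ∈ Finset.univ) =>
      hasSum_sum fun j (_ : j ∈ Finset.univ) => hs i j
    rw [← this.tsum_eq]
    refine tsum_congr fun k => ?_
    simp only [q, Finset.sum_mul]
    refine Finset.sum_congr rfl fun i _ => Finset.sum_congr rfl fun j _ => ?_
    ring
  -- dilating the points by `√s` replaces the coefficient `q k` by `q k * s ^ k`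
  have hpos : ∀ s : ℝ, 0 ≤ s → s ≤ 1 → 0 ≤ ∑' k, q k * s ^ k := by
    intro s hs0 hs1
    rw [← hswap _ fun k => by rw [abs_of_nonneg (by positivity)]; exact pow_le_one₀ hs0 hs1]
    have h := besselKernel_nonneg hn (fun i => √s • t i) ξ
    have h2 : ∀ i j k, besselTerm n k ‖√s • t i - √s • t j‖ =
        s ^ k * besselTerm n k ‖t i - t j‖ := by
      intro i j k
      rw [← smul_sub, norm_smul, besselTerm, besselTerm, mul_pow, Real.norm_of_nonneg
        (Real.sqrt_nonneg s), Real.sq_sqrt hs0, ← mul_neg, mul_pow, mul_div_assoc]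
    simpa only [h2] using h
  have hfin := tsum_mul_exp_expMoment_nonneg hw hw0 hq hpos
  rw [hswap _ hc]
  have h3 : ∀ k, q k * Real.exp (expMoment w k - expMoment w 0) =
      q k * Real.exp (expMoment w k) * (Real.exp (expMoment w 0))⁻¹ := by
    intro k; rw [Real.exp_sub]; ring
  simp only [h3]
  rw [tsum_mul_right]
  exact mul_nonneg hfin (by positivity)

/-! ### Finite difference functionals -/

/-- The linear functional `∑ c_x [x] ↦ ∑ c_x g(x)` on the group algebra of a space `E`, whose
elements are finitely supported signed measures and whose product is convolution. -/
noncomputable def evalMeas {E : Type*} [AddCommGroup E] (g : E → ℝ) :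
    AddMonoidAlgebra ℝ E →ₗ[ℝ] ℝ where
  toFun μ := Finsupp.linearCombination ℝ g μ.coeff
  map_add' := by simp
  map_smul' := by simp

lemma evalMeas_apply {E : Type*} [AddCommGroup E] (g : E → ℝ) (μ : AddMonoidAlgebra ℝ E) :
    evalMeas g μ = ∑ x ∈ μ.coeff.support, μ.coeff x * g x := rfl

lemma evalMeas_single {E : Type*} [AddCommGroup E] (g : E → ℝ) (x : E) (c : ℝ) :
    evalMeas g (AddMonoidAlgebra.single x c) = c * g x := by
  simp [evalMeas]

lemma evalMeas_const_mul {E : Type*} [AddCommGroup E] (c : ℝ) (g : E → ℝ)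
    (μ : AddMonoidAlgebra ℝ E) : evalMeas (fun x => c * g x) μ = c * evalMeas g μ := by
  simp only [evalMeas_apply, Finset.mul_sum]
  exact Finset.sum_congr rfl fun x _ => by ring

lemma hasSum_evalMeas {E : Type*} [AddCommGroup E] {g : ℕ → E → ℝ} {G : E → ℝ}
    (h : ∀ x, HasSum (fun k => g k x) (G x)) (μ : AddMonoidAlgebra ℝ E) :
    HasSum (fun k => evalMeas (g k) μ) (evalMeas G μ) := by
  simp only [evalMeas_apply]
  exact hasSum_sum fun x _ => (h x).mul_left _

lemma exists_eq_sum_single {E : Type*} [AddCommGroup E] (μ : AddMonoidAlgebra ℝ E) :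
    ∃ (m : ℕ) (t : Fin m → E) (ξ : Fin m → ℝ), μ = ∑ i, AddMonoidAlgebra.single (t i) (ξ i) := by
  let e := μ.coeff.support.equivFin
  refine ⟨_, fun i => (e.symm i : E), fun i => μ.coeff (e.symm i), ?_⟩
  rw [e.symm.sum_comp (fun x : μ.coeff.support =>
    AddMonoidAlgebra.single (x : E) (μ.coeff (x : E))),
    Finset.sum_coe_sort μ.coeff.support fun x => AddMonoidAlgebra.single x (μ.coeff x)]
  apply AddMonoidAlgebra.coeff_injective
  rw [AddMonoidAlgebra.coeff_sum]
  exact (Finsupp.sum_single μ.coeff).symm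

/-- The image of a measure under the reflection `x ↦ -x`. -/
noncomputable def reflect (E : Type*) [AddCommGroup E] :
    AddMonoidAlgebra ℝ E →ₐ[ℝ] AddMonoidAlgebra ℝ E :=
  AddMonoidAlgebra.mapDomainAlgHom ℝ ℝ (negAddMonoidHom : E →+ E)

lemma reflect_single {E : Type*} [AddCommGroup E] (x : E) (c : ℝ) :
    reflect E (AddMonoidAlgebra.single x c) = AddMonoidAlgebra.single (-x) c := by
  simp [reflect]

/-- The quadratic form of the kernel `f ‖s • (x - y)‖` at `μ` integrates `f ‖s • x‖` against the
convolution of `μ` with its reflection. -/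
lemma evalMeas_mul_reflect_nonneg {n : ℕ} {f : ℝ → ℝ} (h : IsRPD n f) (s : ℝ)
    (μ : AddMonoidAlgebra ℝ (EuclideanSpace ℝ (Fin n))) :
    0 ≤ evalMeas (fun x => f ‖s • x‖) (μ * reflect _ μ) := by
  obtain ⟨m, t, ξ, rfl⟩ := exists_eq_sum_single μ
  have := real_of_isRPD h (fun i => s • t i) ξ
  simpa [Finset.sum_mul_sum, reflect_single, AddMonoidAlgebra.single_mul_single, evalMeas_single,
    smul_sub, smul_add, ← sub_eq_add_neg] using this

/-- The discrete Laplacian at the origin: `∑_i ([e_i] + [-e_i] - 2[0])`. -/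
noncomputable def discreteLaplacian (d : ℕ) : AddMonoidAlgebra ℝ (EuclideanSpace ℝ (Fin d)) :=
  ∑ i, (AddMonoidAlgebra.single (EuclideanSpace.single i 1) 1 +
    AddMonoidAlgebra.single (-EuclideanSpace.single i 1) 1 - AddMonoidAlgebra.single 0 2)

lemma reflect_discreteLaplacian (d : ℕ) :
    reflect _ (discreteLaplacian d) = discreteLaplacian d := by
  simp only [discreteLaplacian, map_sum, map_add, map_sub, reflect_single, neg_neg, neg_zero]
  exact Finset.sum_congr rfl fun i _ => by ring

/-- The moment generating series `∑_j (∫ ⟨x, ω⟩^j dμ) X^j / j!` of a measure `μ` in the direction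
`ω`; it turns convolution into multiplication. -/
noncomputable def momentSeries {d : ℕ} (ω : EuclideanSpace ℝ (Fin d)) :
    AddMonoidAlgebra ℝ (EuclideanSpace ℝ (Fin d)) →ₐ[ℝ] PowerSeries ℝ :=
  AddMonoidAlgebra.lift ℝ (PowerSeries ℝ) (EuclideanSpace ℝ (Fin d))
    { toFun := fun x => PowerSeries.rescale (inner ℝ x.toAdd ω) (PowerSeries.exp ℝ)
      map_one' := by
        simp
      map_mul' := fun x y => by
        rw [toAdd_mul, inner_add_left, PowerSeries.exp_mul_exp_eq_exp_add] }

lemma coeff_momentSeries {d : ℕ} (ω : EuclideanSpace ℝ (Fin d))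
    (μ : AddMonoidAlgebra ℝ (EuclideanSpace ℝ (Fin d))) (j : ℕ) :
    PowerSeries.coeff j (momentSeries ω μ) =
      evalMeas (fun x => (inner ℝ x ω) ^ j) μ / (j.factorial : ℝ) := by
  rw [momentSeries, AddMonoidAlgebra.lift_apply, Finsupp.sum, map_sum, evalMeas_apply,
    Finset.sum_div]
  refine Finset.sum_congr rfl fun x _ => ?_
  simp [PowerSeries.coeff_exp, PowerSeries.coeff_rescale]
  ring

lemma momentSeries_discreteLaplacian {d : ℕ} {ω : EuclideanSpace ℝ (Fin d)} (hω : ‖ω‖ = 1) :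
    ∃ U : PowerSeries ℝ, PowerSeries.constantCoeff U = 1 ∧
      momentSeries ω (discreteLaplacian d) = PowerSeries.X ^ 2 * U := by
  have hco : ∀ j, PowerSeries.coeff j (momentSeries ω (discreteLaplacian d)) =
      (∑ i, (ω i ^ j + (-ω i) ^ j - 2 * 0 ^ j)) / (j.factorial : ℝ) := by
    intro j
    rw [coeff_momentSeries]
    simp [discreteLaplacian, evalMeas_single, EuclideanSpace.inner_single_left, mul_assoc]
  have hdvd : PowerSeries.X ^ 2 ∣ momentSeries ω (discreteLaplacian d) := by
    rw [PowerSeries.X_pow_dvd_iff]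
    intro j hj
    rw [hco]
    interval_cases j
    · norm_num
    · simp
  obtain ⟨U, hU⟩ := hdvd
  refine ⟨U, ?_, hU⟩
  have h2 := hco 2
  rw [hU] at h2
  have h3 : PowerSeries.coeff 2 (PowerSeries.X ^ 2 * U) = PowerSeries.constantCoeff U := by
    simpa using PowerSeries.coeff_X_pow_mul U 2 0
  rw [h3] at h2
  have h4 : ∑ i, ω i ^ 2 = 1 := by
    rw [← EuclideanSpace.real_norm_sq_eq, hω, one_pow]
  rw [h2]
  have h5 : ∑ i, (ω i ^ 2 + (-ω i) ^ 2 - 2 * 0 ^ 2) = 2 * ∑ i, ω i ^ 2 := by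
    rw [Finset.mul_sum]
    exact Finset.sum_congr rfl fun i _ => by ring
  rw [h5, h4]
  norm_num

/-- The `k`-th power of the discrete Laplacian kills `⟨x, ω⟩^(2j)` for `j < k` and acts as the
`2k`-th derivative on `⟨x, ω⟩^(2k)`. -/
lemma evalMeas_inner_pow {d : ℕ} {ω : EuclideanSpace ℝ (Fin d)} (hω : ‖ω‖ = 1) {j k : ℕ}
    (hjk : j ≤ k) :
    evalMeas (fun x => (inner ℝ x ω) ^ (2 * j)) (discreteLaplacian d ^ k) =
      if j = k then ((2 * k).factorial : ℝ) else 0 := by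
  obtain ⟨U, hU1, hU⟩ := momentSeries_discreteLaplacian hω
  have h := coeff_momentSeries ω (discreteLaplacian d ^ k) (2 * j)
  rw [map_pow, hU, mul_pow, ← pow_mul, PowerSeries.coeff_X_pow_mul'] at h
  have hf : ((2 * j).factorial : ℝ) ≠ 0 := by positivity
  rw [eq_div_iff hf] at h
  rw [← h]
  rcases hjk.eq_or_lt with rfl | hlt
  · simp [hU1]
  · rw [if_neg (by omega), if_neg hlt.ne, zero_mul]

/-- Averaging `evalMeas_inner_pow` over the sphere: the `k`-th power of the discrete Laplacian acts on
`‖x‖^(2j)`, `j ≤ k`, as the `k`-th power of the Laplacian. -/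
lemma evalMeas_norm_pow {d : ℕ} (hd : 1 ≤ d) {j k : ℕ} (hjk : j ≤ k) :
    evalMeas (fun x => ‖x‖ ^ (2 * j)) (discreteLaplacian d ^ k) =
      if j = k then 4 ^ k * (k.factorial : ℝ) * risingFactorial (d / 2) k else 0 := by
  set σ := (volume : Measure (EuclideanSpace ℝ (Fin d))).toSphere
  have hσ : 0 < σ.real univ := toSphere_real_univ_pos hd
  have hd0 : (0 : ℝ) < d / 2 := by
    have : (0 : ℝ) < d := by exact_mod_cast hd
    positivity
  have hrd := risingFactorial_pos hd0 j
  have hr2 : 0 < risingFactorial (1 / 2) j := risingFactorial_pos (by norm_num) j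
  have h1 : ∫ ω : Metric.sphere (0 : EuclideanSpace ℝ (Fin d)) 1,
      evalMeas (fun x => (inner ℝ x (ω : EuclideanSpace ℝ (Fin d))) ^ (2 * j))
        (discreteLaplacian d ^ k) ∂σ =
      σ.real univ * (if j = k then ((2 * k).factorial : ℝ) else 0) := by
    have : ∀ ω : Metric.sphere (0 : EuclideanSpace ℝ (Fin d)) 1,
        evalMeas (fun x => (inner ℝ x (ω : EuclideanSpace ℝ (Fin d))) ^ (2 * j))
          (discreteLaplacian d ^ k) = if j = k then ((2 * k).factorial : ℝ) else 0 := fun ω =>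
      evalMeas_inner_pow (by simp) hjk
    simp only [this]
    rw [integral_const, smul_eq_mul]
  have h2 : ∫ ω : Metric.sphere (0 : EuclideanSpace ℝ (Fin d)) 1,
      evalMeas (fun x => (inner ℝ x (ω : EuclideanSpace ℝ (Fin d))) ^ (2 * j))
        (discreteLaplacian d ^ k) ∂σ =
      σ.real univ * (risingFactorial (1 / 2) j / risingFactorial (d / 2) j) *
        evalMeas (fun x => ‖x‖ ^ (2 * j)) (discreteLaplacian d ^ k) := by
    simp only [evalMeas_apply]
    rw [integral_finsetSum, Finset.mul_sum]
    · refine Finset.sum_congr rfl fun x _ => ?_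
      rw [integral_const_mul, integral_sphere_inner_pow d hd]
      ring
    · intro x _
      refine Integrable.const_mul (Integrable.of_bound (C := ‖x‖ ^ (2 * j)) (by fun_prop)
        (Filter.Eventually.of_forall fun ω => ?_)) _
      rw [norm_pow, Real.norm_eq_abs]
      gcongr
      simpa using abs_real_inner_le_norm x (ω : EuclideanSpace ℝ (Fin d))
  rw [h1, mul_assoc] at h2
  have h3 := mul_left_cancel₀ hσ.ne' h2
  rw [div_mul_eq_mul_div, eq_div_iff hrd.ne'] at h3
  refine mul_left_cancel₀ hr2.ne' (h3.symm.trans ?_)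
  split_ifs with hj
  · subst hj
    rw [factorial_two_mul]
    ring
  · simp

/-! ### Failure of positive definiteness in dimension `n + 1` -/

lemma tendsto_tsum_div_pow {A : ℕ → ℝ} (hA : Summable fun j => |A j|) {k : ℕ}
    (h0 : ∀ j < k, A j = 0) :
    Tendsto (fun s : ℝ => (∑' j, A j * s ^ j) / s ^ k) (𝓝[>] 0) (𝓝 (A k)) := by
  have hlim : Tendsto (fun s : ℝ => ∑' j, A j * s ^ j / s ^ k) (𝓝[>] 0)
      (𝓝 (∑' j, if j = k then A k else 0)) := by
    have hIoc : ∀ᶠ s : ℝ in 𝓝[>] 0, s ∈ Ioc (0 : ℝ) 1 := Ioc_mem_nhdsGT one_pos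
    have heq : ∀ {j : ℕ} {s : ℝ}, 0 < s → k ≤ j → A j * s ^ j / s ^ k = A j * s ^ (j - k) := by
      intro j s hs hj
      rw [mul_div_assoc, ← pow_sub₀ _ hs.ne' hj |>.trans (div_eq_mul_inv _ _).symm]
    refine tendsto_tsum_of_dominated_convergence hA (fun j => ?_) ?_
    · rcases lt_trichotomy j k with hj | rfl | hj
      · simp only [h0 j hj, hj.ne, zero_mul, zero_div, if_false]
        exact tendsto_const_nhds
      · rw [if_pos rfl]
        refine tendsto_const_nhds.congr' ?_
        filter_upwards [hIoc] with s hs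
        rw [heq hs.1 le_rfl]
        simp
      · rw [if_neg hj.ne']
        have h1 : Tendsto (fun s : ℝ => A j * s ^ (j - k)) (𝓝[>] 0) (𝓝 0) := by
          have : Continuous fun s : ℝ => A j * s ^ (j - k) := by fun_prop
          have h2 := this.tendsto 0
          rw [zero_pow (by omega), mul_zero] at h2
          exact h2.mono_left nhdsWithin_le_nhds
        refine h1.congr' ?_
        filter_upwards [hIoc] with s hs
        rw [heq hs.1 hj.le]
    · filter_upwards [hIoc] with s hs j
      rcases lt_or_ge j k with hj | hj
      · simp [h0 j hj]
      · rw [heq hs.1 hj, norm_mul, Real.norm_eq_abs, Real.norm_eq_abs]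
        refine mul_le_of_le_one_right (abs_nonneg _) ?_
        rw [abs_of_nonneg (by have := hs.1; positivity)]
        exact pow_le_one₀ hs.1.le hs.2
  simpa only [tsum_ite_eq, tsum_div_const] using hlim

/-- If the series with coefficients `c_k` is positive definite in dimension `d`, the numbers
`m_k = c_k (d/2)_k / (n/2)_k` satisfy the Cauchy–Schwarz inequality `m_j² ≤ m_{2j}`, as moments
of a probability measure do. Indeed `(-4)^k m_k` is the value at the origin of the `k`-th power of
the Laplacian on the function; testing positivity on combinations of `[0]` and the `j`-th power of
the discrete Laplacian and letting the mesh `√s` tend to `0` gives the inequality. -/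
lemma sq_le_of_isRPD {n d : ℕ} (hn : 1 ≤ n) (hd : 1 ≤ d) {c : ℕ → ℝ} (hc : ∀ k, |c k| ≤ 1)
    (hc0 : c 0 = 1) (h : IsRPD d fun r => ∑' k, c k * besselTerm n k r) (j : ℕ) :
    (c j * (risingFactorial (d / 2) j / risingFactorial (n / 2) j)) ^ 2 ≤
      c (2 * j) * (risingFactorial (d / 2) (2 * j) / risingFactorial (n / 2) (2 * j)) := by
  have hn0 : (0 : ℝ) < n / 2 := by
    have : (0 : ℝ) < n := by exact_mod_cast hn
    positivity
  let L := discreteLaplacian d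
  let A : ℕ → ℕ → ℝ := fun k j => evalMeas (fun x => c j * besselTerm n j ‖x‖) (L ^ k)
  have hA : ∀ k j, A k j = c j * ((-1) ^ j / (risingFactorial (n / 2) j * (j.factorial : ℝ))) *
      evalMeas (fun x => ‖x‖ ^ (2 * j)) (L ^ k) := by
    intro k j
    rw [← evalMeas_const_mul]
    simp only [A]
    congr 2
    funext x
    rw [besselTerm, neg_pow (‖x‖ ^ 2) j, ← pow_mul]
    ring
  have hAsum : ∀ k, Summable fun j => |A k j| := fun k =>
    (hasSum_evalMeas (fun x => (summable_mul_besselTerm hn hc ‖x‖).hasSum) (L ^ k)).summable.abs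
  have hA0 : ∀ k, ∀ j < k, A k j = 0 := by
    intro k j hj
    rw [hA, evalMeas_norm_pow hd hj.le, if_neg hj.ne, mul_zero]
  have hAk : ∀ k, A k k =
      (-4) ^ k * (c k * (risingFactorial (d / 2) k / risingFactorial (n / 2) k)) := by
    intro k
    have h1 := risingFactorial_pos hn0 k
    rw [hA, evalMeas_norm_pow hd le_rfl, if_pos rfl, neg_pow (4 : ℝ)]
    field_simp
  let P : ℕ → ℝ → ℝ := fun k s => ∑' j, A k j * s ^ j
  have hP : ∀ k s, 0 ≤ s → evalMeas (fun x => ∑' k, c k * besselTerm n k ‖√s • x‖) (L ^ k) =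
      P k s := by
    intro k s hs
    rw [← (hasSum_evalMeas (fun x => (summable_mul_besselTerm hn hc ‖√s • x‖).hasSum)
      (L ^ k)).tsum_eq]
    refine tsum_congr fun j => ?_
    rw [mul_comm (A k j), ← evalMeas_const_mul]
    congr 2
    funext x
    rw [norm_smul, besselTerm, besselTerm, mul_pow, Real.norm_of_nonneg
        (Real.sqrt_nonneg s), Real.sq_sqrt hs, ← mul_neg, mul_pow]
    ring
  have hpos : ∀ s a b : ℝ, 0 ≤ s →
      0 ≤ a ^ 2 * P 0 s + 2 * a * b * P j s + b ^ 2 * P (2 * j) s := by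
    intro s a b hs
    have h1 := evalMeas_mul_reflect_nonneg h √s (a • L ^ 0 + b • L ^ j)
    have h2 : (a • L ^ 0 + b • L ^ j) * reflect _ (a • L ^ 0 + b • L ^ j) =
        (a ^ 2) • L ^ 0 + (2 * a * b) • L ^ j + (b ^ 2) • L ^ (2 * j) := by
      simp only [map_add, map_smul, map_pow, L, reflect_discreteLaplacian]
      simp only [Algebra.smul_def, map_mul, map_pow, map_ofNat, pow_mul']
      ring
    rw [h2] at h1
    simpa only [map_add, map_smul, smul_eq_mul, hP _ s hs] using h1
  have hlim : ∀ a b : ℝ, 0 ≤ a ^ 2 * A 0 0 + 2 * a * b * A j j + b ^ 2 * A (2 * j) (2 * j) := by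
    intro a b
    have h1 := tendsto_tsum_div_pow (hAsum 0) (hA0 0)
    have h2 := tendsto_tsum_div_pow (hAsum j) (hA0 j)
    have h3 := tendsto_tsum_div_pow (hAsum (2 * j)) (hA0 (2 * j))
    refine ge_of_tendsto (((h1.const_mul (a ^ 2)).add (h2.const_mul (2 * a * b))).add
      (h3.const_mul (b ^ 2))) ?_
    filter_upwards [self_mem_nhdsWithin] with s hs
    have hs0 : (0 : ℝ) < s := hs
    refine (hpos s a (b / s ^ j) hs0.le).trans_eq ?_
    simp only [P]
    rw [pow_mul' s 2 j]
    field_simp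
  have hA00 : A 0 0 = 1 := by
    rw [hAk, hc0]
    simp
  -- the minimizer of the quadratic form in `a` for `b = -1`
  have hfin := hlim (A j j) (-1)
  rw [hA00, hAk j, hAk (2 * j)] at hfin
  have h16 : ((-4 : ℝ) ^ j) ^ 2 = (-4) ^ (2 * j) := by rw [pow_mul']
  have hp : (0 : ℝ) < (-4) ^ (2 * j) := (even_two_mul j).pow_pos (by norm_num)
  refine le_of_mul_le_mul_left ?_ hp
  rw [← h16] at hfin ⊢
  nlinarith [hfin]

lemma risingFactorial_add_one_div {x : ℝ} (hx : 0 < x) (k : ℕ) :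
    risingFactorial (x + 1) k / risingFactorial x k = (x + k) / x := by
  have h0 := risingFactorial_pos hx k
  rw [div_eq_div_iff h0.ne' hx.ne']
  induction k with
  | zero => simp [risingFactorial_zero]
  | succ k ih =>
    have ih := ih (risingFactorial_pos hx k)
    rw [risingFactorial_succ, risingFactorial_succ]
    push_cast
    linear_combination (x + 1 + k) * ih

lemma risingFactorial_half_ratio_le {x : ℝ} (hx : 0 < x) (k : ℕ) :
    risingFactorial (x + 1 / 2) k / risingFactorial x k ≤ (x + k) / x := by
  rw [← risingFactorial_add_one_div hx]
  have h0 := risingFactorial_pos hx k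
  gcongr
  exact Finset.prod_le_prod (fun i _ => by positivity) fun i _ => by linarith

/-- `(x + 1/2)_k / (x)_k` is at least the square root of `(x + 1)_k / (x)_k = (x + k) / x`, because
`(y + 1/2)² ≥ y (y + 1)`. -/
lemma tendsto_risingFactorial_half_ratio {x : ℝ} (hx : 0 < x) :
    Tendsto (fun k => risingFactorial (x + 1 / 2) k / risingFactorial x k) atTop atTop := by
  have h1 : Tendsto (fun k : ℕ => √((x + k) / x)) atTop atTop :=
    Real.tendsto_sqrt_atTop.comp ((tendsto_atTop_add_const_left _ _
      tendsto_natCast_atTop_atTop).atTop_div_const hx)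
  refine tendsto_atTop_mono (fun k => ?_) h1
  have h0 := risingFactorial_pos hx k
  have h2 := risingFactorial_pos (by positivity : 0 < x + 1 / 2) k
  rw [← risingFactorial_add_one_div hx]
  refine Real.sqrt_le_iff.2 ⟨by positivity, ?_⟩
  rw [div_pow, div_le_div_iff₀ h0 (by positivity), sq (risingFactorial x k), ← mul_assoc]
  gcongr
  rw [risingFactorial, risingFactorial, risingFactorial, ← Finset.prod_mul_distrib,
    ← Finset.prod_pow]
  exact Finset.prod_le_prod (fun i _ => by positivity) fun i _ => by nlinarith

/-- Here `m_k` is unbounded, so `m_j ≥ 2` for some `j`, and `m_j² ≤ m_{2j}` then makes `m` grow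
exponentially along `2^l j`; but `m_k` grows at most linearly. -/
lemma not_isRPD_succ {n : ℕ} (hn : 1 ≤ n) {c : ℕ → ℝ} (hc : ∀ k, |c k| ≤ 1) (hc0 : c 0 = 1)
    {δ : ℝ} (hδ : 0 < δ) (hcδ : ∀ k, δ ≤ c k) :
    ¬ IsRPD (n + 1) fun r => ∑' k, c k * besselTerm n k r := by
  intro h
  have hn0 : (0 : ℝ) < n / 2 := by
    have : (0 : ℝ) < n := by exact_mod_cast hn
    positivity
  let m : ℕ → ℝ := fun k =>
    c k * (risingFactorial (n / 2 + 1 / 2) k / risingFactorial (n / 2) k)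
  have hsq : ∀ j, m j ^ 2 ≤ m (2 * j) := by
    intro j
    have := sq_le_of_isRPD hn (by omega) hc hc0 h j
    rw [show (((n + 1 : ℕ) : ℝ) / 2) = n / 2 + 1 / 2 by push_cast; ring] at this
    exact this
  obtain ⟨j, hj⟩ : ∃ j, 2 ≤ m j := by
    obtain ⟨j, hj⟩ := ((tendsto_risingFactorial_half_ratio hn0).eventually_ge_atTop (2 / δ)).exists
    refine ⟨j, ?_⟩
    calc (2 : ℝ) = δ * (2 / δ) := by field_simp
      _ ≤ m j := mul_le_mul (hcδ j) hj (by positivity) (hδ.le.trans (hcδ j))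
  have hgrow : ∀ l : ℕ, (2 : ℝ) ^ (2 ^ l) ≤ m (2 ^ l * j) := by
    intro l
    induction l with
    | zero => simpa using hj
    | succ l ih =>
      calc (2 : ℝ) ^ (2 ^ (l + 1)) = (2 ^ (2 ^ l)) ^ 2 := by rw [← pow_mul, pow_succ]
        _ ≤ m (2 ^ l * j) ^ 2 := by gcongr
        _ ≤ m (2 * (2 ^ l * j)) := hsq _
        _ = m (2 ^ (l + 1) * j) := by congr 1; ring
  have hlin : ∀ k : ℕ, m k ≤ (n / 2 + k) / (n / 2) := fun k =>
    (mul_le_of_le_one_left (by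
      have := risingFactorial_pos hn0 k
      have := risingFactorial_pos (by positivity : (0 : ℝ) < n / 2 + 1 / 2) k
      positivity) ((le_abs_self _).trans (hc k))).trans (risingFactorial_half_ratio_le hn0 k)
  -- `2 ^ N` would be bounded by an affine function of `N`, along `N = 2 ^ l`
  have hbound : ∀ l : ℕ, (2 : ℝ) ^ (2 ^ l) ≤ 1 + (j / (n / 2)) * (2 ^ l : ℕ) := by
    intro l
    refine ((hgrow l).trans (hlin _)).trans_eq ?_
    push_cast
    field_simp
  have hC : (0 : ℝ) ≤ j / (n / 2) := by positivity
  have hlt : ∀ l : ℕ, ((2 ^ l : ℕ) : ℝ) ≤ 2 ^ (2 ^ l) := fun l => by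
    exact_mod_cast (Nat.lt_two_pow_self (n := 2 ^ l)).le
  obtain ⟨l, hl⟩ := exists_nat_gt (1 + 2 * ((j : ℝ) / (n / 2)))
  have h1 := hbound (l + 1)
  have h2 : (l : ℝ) ≤ (2 ^ l : ℕ) := by exact_mod_cast (Nat.lt_two_pow_self (n := l)).le
  have h3 := hlt l
  rw [pow_succ 2 l, pow_mul] at h1
  push_cast at h1 h2 h3
  have h4 := mul_le_mul_of_nonneg_left h3 hC
  have h5 : (1 : ℝ) ≤ 2 ^ (2 ^ l) := one_le_pow₀ (by norm_num)
  nlinarith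

/-! ### The hypergeometric function -/

lemma levyDensity_nonneg {m : ℕ} {α β : Fin m → ℝ}
    (hv : ∀ t : ℝ, 0 < t → t ≤ 1 → 0 ≤ ∑ j, (t ^ α j - t ^ β j)) {u : ℝ} (hu : 0 < u) :
    0 ≤ levyDensity α β u := by
  have h := hv (Real.exp (-u)) (Real.exp_pos _) (Real.exp_le_one_iff.2 (by linarith))
  have h1 : ∀ x : ℝ, Real.exp (-u) ^ x = Real.exp (-(x * u)) := fun x => by
    rw [← Real.exp_mul]
    congr 1
    ring
  simp only [h1] at h
  exact div_nonneg h (mul_pos hu (one_sub_exp_neg_pos hu)).le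

/-- Splitting off the factor `(n/2)_k` turns the hypergeometric series into a series of
`0F1(; n/2)` terms. -/
lemma pFq_eq_tsum_besselTerm {n p : ℕ} (hn : 1 ≤ n) (a : Fin p → ℝ) (b : Fin (p + 1) → ℝ) (r : ℝ) :
    pFq a b (-(r ^ 2)) = ∑' k, (∏ j, risingFactorial
      ((Fin.cons ((n : ℝ) / 2) a : Fin (p + 1) → ℝ) j) k / risingFactorial (b j) k) *
        besselTerm n k r := by
  have hn0 : (0 : ℝ) < n / 2 := by
    have : (0 : ℝ) < n := by exact_mod_cast hn
    positivity
  refine tsum_congr fun k => ?_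
  have h := (risingFactorial_pos hn0 k).ne'
  rw [Finset.prod_div_distrib, Fin.prod_univ_succ (fun j => risingFactorial
    ((Fin.cons ((n : ℝ) / 2) a : Fin (p + 1) → ℝ) j) k), besselTerm]
  simp only [Fin.cons_zero, Fin.cons_succ]
  rw [div_mul_div_comm, div_mul_eq_mul_div,
    show (risingFactorial (n / 2) k * ∏ i, risingFactorial (a i) k) * (-(r ^ 2)) ^ k =
      risingFactorial (n / 2) k * ((∏ i, risingFactorial (a i) k) * (-(r ^ 2)) ^ k) by ring,
    show (∏ j, risingFactorial (b j) k) * (risingFactorial (n / 2) k * (k.factorial : ℝ)) =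
      risingFactorial (n / 2) k * ((∏ j, risingFactorial (b j) k) * (k.factorial : ℝ)) by ring,
    mul_div_mul_left _ _ h]

/-- If `a' = (n/2, a)`, `v_{a',b}(t) ≥ 0` on `(0,1]` and the parametric
excess `∑ b_j - ∑ a_j` equals exactly `n/2`, then `r ↦ p-1Fp(a;b;-r²)` belongs to
`Φ_n \ Φ_{n+1}`: it is `n`-RPD but not `(n+1)`-RPD. -/
theorem rpd_boundary_case
    (n p : ℕ) (hn : 1 ≤ n)
    (a : Fin p → ℝ) (b : Fin (p + 1) → ℝ)
    (ha : ∀ i, 0 < a i) (hb : ∀ j, 0 < b j)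
    (hv : ∀ t : ℝ, 0 < t → t ≤ 1 →
      0 ≤ ∑ j : Fin (p + 1),
        (t ^ ((Fin.cons ((n : ℝ) / 2) a : Fin (p + 1) → ℝ) j) - t ^ b j))
    (hpsi : ∑ j, b j - ∑ i, a i = (n : ℝ) / 2) :
    IsRPD n (fun r => pFq a b (-(r ^ 2))) ∧
    ¬ IsRPD (n + 1) (fun r => pFq a b (-(r ^ 2))) := by
  let α : Fin (p + 1) → ℝ := Fin.cons ((n : ℝ) / 2) a
  have hn0 : (0 : ℝ) < n / 2 := by
    have : (0 : ℝ) < n := by exact_mod_cast hn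
    positivity
  have hα : ∀ j, 0 < α j := Fin.cases hn0 ha
  have hsum : ∑ j, α j = ∑ j, b j := by
    rw [Fin.sum_univ_succ]
    simp only [α, Fin.cons_zero, Fin.cons_succ]
    linarith
  have hw := integrableOn_levyDensity hα hb hsum
  have hw0 : ∀ u, 0 < u → 0 ≤ levyDensity α b u := fun u hu => levyDensity_nonneg hv hu
  have hF : (fun r => pFq a b (-(r ^ 2))) = fun r => ∑' k, Real.exp
      (expMoment (levyDensity α b) k - expMoment (levyDensity α b) 0) * besselTerm n k r := by
    funext r
    simp only [pFq_eq_tsum_besselTerm hn a b r, ← prod_risingFactorial_div_eq_exp hα hb hsum, α]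
  rw [hF]
  refine ⟨isRPD_exp_expMoment hn hw hw0, ?_⟩
  refine not_isRPD_succ hn (fun k => ?_) (by simp)
    (Real.exp_pos (-expMoment (levyDensity α b) 0)) fun k => ?_
  · rw [Real.abs_exp, Real.exp_le_one_iff, sub_nonpos]
    exact expMoment_le hw hw0 k
  · rw [Real.exp_le_exp]
    linarith [expMoment_nonneg hw0 k]
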